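/- Let 0<s<1 and 1<p<∞ satisfy sp>1. There is a constant C depending only on s and p with the following property. Let (Ñ, d_Ñ) and (N, d_N) be metric spaces and π : Ñ → N be nonexpansive (d_N(π(a),π(b)) ≤ d_Ñ(a,b) for all a,b) and an isometry at scale ρ>0 (d_N(π(a),π(b)) = d_Ñ(a,b) whenever d_Ñ(a,b) ≤ ρ). Assume Ñ has diameter at most D < ∞. Then for every interval I ⊆ ℝ and every continuous map ũ : I → Ñ, writing u := π ∘ ũ, one has ∫_I∫_I d_Ñ(ũ(x),ũ(y))^p/|x-y|^{1+sp} dx dy ≤ C · max(1, D/ρ)^p · ∫_I∫_I d_N(u(x),u(y))^p/|x-y|^{1+sp} dx dy. -/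

import Mathlib

open MeasureTheory Set ENNReal

/-!
If `f` jumps by more than `t` between `x` and `y`, it jumps by more than `t / 2` between the
midpoint and one of them. A midpoint substitution in dimension `d` multiplies the kernel
`|x - y| ^ (-q)` by `2 ^ (-q)` and the measure by `2 ^ d`, so the kernel mass `M t` of the pairs
with jump larger than `t` satisfies `M t ≤ 2 ^ (d + 1 - q) * M (t / 2)`. Pairs with jump between
`r / 2` and `r` are seen by `π`, hence `M (r / 2) ≤ M r + (r / 2) ^ (-p) * G`, where `G` is the
energy of `π ∘ f`. As `q > d + 1`, the term `M r` can be absorbed, provided it is finite, which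
uniform continuity guarantees on compact sets. Jumps larger than `r` therefore contribute at most
`D ^ p * M r ≲ (D / r) ^ p * G` to the energy of `f`, and the others at most `G`.
-/

section JumpSet

variable {α X : Type*} [PseudoEMetricSpace X] {f : α → X} {s : Set α} {t : ℝ≥0∞}

/-- The pairs of points of `s` at which `f` jumps by more than `t`. -/
def jumpSet (f : α → X) (s : Set α) (t : ℝ≥0∞) : Set (α × α) :=
  (s ×ˢ s) ∩ {z | t < edist (f z.1) (f z.2)}

lemma jumpSet_subset_prod : jumpSet f s t ⊆ s ×ˢ s := inter_subset_left

lemma continuousOn_edist_prod [TopologicalSpace α] (hf : ContinuousOn f s) :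
    ContinuousOn (fun z : α × α => edist (f z.1) (f z.2)) (s ×ˢ s) :=
  continuous_edist.comp_continuousOn <|
    (hf.comp continuousOn_fst fun _ hz => hz.1).prodMk (hf.comp continuousOn_snd fun _ hz => hz.2)

end JumpSet

section JumpMass

variable {α X Y : Type*} [PseudoEMetricSpace α] [MeasurableSpace α]
  [PseudoEMetricSpace X] [PseudoEMetricSpace Y]

/-- The `p`-th power of the Gagliardo seminorm of `f` on `s`, with the exponent `q` of the kernel
as a free parameter: for `W^{σ,p}` in dimension `d` it is `q = d + σ p`. For `p, q > 0`
the integrand is `0 / 0 = 0` on the diagonal. -/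
noncomputable def gagliardoEnergy (μ : Measure α) (p q : ℝ) (f : α → X) (s : Set α) : ℝ≥0∞ :=
  ∫⁻ x in s, ∫⁻ y in s, edist (f x) (f y) ^ p / edist x y ^ q ∂μ ∂μ

/-- The mass of `jumpSet f s t` for the Gagliardo kernel `d(x, y) ^ (-q)`. -/
noncomputable def jumpMass (μ : Measure α) (q : ℝ) (f : α → X) (s : Set α) (t : ℝ≥0∞) : ℝ≥0∞ :=
  ∫⁻ z in jumpSet f s t, (edist z.1 z.2 ^ q)⁻¹ ∂μ.prod μ

variable {μ : Measure α} {p q : ℝ} {π : X → Y} {f : α → X} {s u : Set α} {t r D : ℝ≥0∞}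

lemma gagliardoEnergy_mono (h : s ⊆ u) :
    gagliardoEnergy μ p q f s ≤ gagliardoEnergy μ p q f u :=
  lintegral_mono' (Measure.restrict_mono_set μ h) fun _ => lintegral_mono_set h

lemma gagliardoEnergy_congr_ae (h : s =ᵐ[μ] u) :
    gagliardoEnergy μ p q f s = gagliardoEnergy μ p q f u := by
  simp only [gagliardoEnergy, Measure.restrict_congr_set h]

lemma setLIntegral_prod_le_gagliardoEnergy [SFinite μ] :
    ∫⁻ z in s ×ˢ s, edist (f z.1) (f z.2) ^ p / edist z.1 z.2 ^ q ∂μ.prod μ ≤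
      gagliardoEnergy μ p q f s := by
  rw [← Measure.prod_restrict]
  exact lintegral_prod_le _

variable [SecondCountableTopology α] [OpensMeasurableSpace α]

lemma measurable_gagliardoKernel : Measurable fun z : α × α => (edist z.1 z.2 ^ q)⁻¹ :=
  (measurable_edist.pow_const q).inv

lemma measurableSet_jumpSet (hs : MeasurableSet s) (hf : ContinuousOn f s) :
    MeasurableSet (jumpSet f s t) := by
  obtain ⟨v, hv, hveq⟩ := continuousOn_iff'.1 (continuousOn_edist_prod hf) (Ioi t) isOpen_Ioi
  have : jumpSet f s t = v ∩ s ×ˢ s := by rw [← hveq, inter_comm]; rfl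
  rw [this]
  exact hv.measurableSet.inter (hs.prod hs)

lemma gagliardoEnergy_eq_setLIntegral_prod [SFinite μ] (hs : MeasurableSet s)
    (hf : ContinuousOn f s) :
    gagliardoEnergy μ p q f s =
      ∫⁻ z in s ×ˢ s, edist (f z.1) (f z.2) ^ p / edist z.1 z.2 ^ q ∂μ.prod μ := by
  have hmeas : AEMeasurable (fun z : α × α => edist (f z.1) (f z.2) ^ p / edist z.1 z.2 ^ q)
      ((μ.prod μ).restrict (s ×ˢ s)) :=
    (((continuousOn_edist_prod hf).aemeasurable (hs.prod hs)).pow_const p).div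
      (measurable_edist.pow_const q).aemeasurable
  rw [← Measure.prod_restrict] at hmeas ⊢
  exact (lintegral_prod _ hmeas).symm

lemma gagliardoEnergy_iUnion [SFinite μ] {K : ℕ → Set α} (hK : Monotone K)
    (hKm : ∀ n, MeasurableSet (K n)) (hf : ContinuousOn f (⋃ n, K n)) :
    gagliardoEnergy μ p q f (⋃ n, K n) = ⨆ n, gagliardoEnergy μ p q f (K n) := by
  have hdir : Directed (· ⊆ ·) fun n => K n ×ˢ K n :=
    Monotone.directed_le fun _ _ h => prod_mono (hK h) (hK h)
  rw [gagliardoEnergy_eq_setLIntegral_prod (.iUnion hKm) hf, ← iUnion_prod_of_monotone hK hK,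
    setLIntegral_iUnion_of_directed _ hdir]
  exact iSup_congr fun n =>
    (gagliardoEnergy_eq_setLIntegral_prod (hKm n) (hf.mono (subset_iUnion K n))).symm

lemma gagliardoEnergy_le_add_jumpMass [SFinite μ] (hp : 0 ≤ p)
    (hπ : ∀ a b, edist a b ≤ r → edist a b ≤ edist (π a) (π b))
    (hs : MeasurableSet s) (hf : ContinuousOn f s)
    (hD : ∀ x ∈ s, ∀ y ∈ s, edist (f x) (f y) ≤ D) :
    gagliardoEnergy μ p q f s ≤
      D ^ p * jumpMass μ q f s r + gagliardoEnergy μ p q (π ∘ f) s := by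
  have hJ : MeasurableSet (jumpSet f s r) := measurableSet_jumpSet hs hf
  rw [gagliardoEnergy_eq_setLIntegral_prod hs hf, ← lintegral_inter_add_sdiff _ _ hJ,
    inter_eq_right.2 jumpSet_subset_prod]
  gcongr
  · rw [jumpMass, ← lintegral_const_mul _ measurable_gagliardoKernel]
    refine setLIntegral_mono' hJ fun z hz => ?_
    rw [div_eq_mul_inv]
    gcongr
    exact hD _ hz.1.1 _ hz.1.2
  · calc ∫⁻ z in (s ×ˢ s) \ jumpSet f s r,
            edist (f z.1) (f z.2) ^ p / edist z.1 z.2 ^ q ∂μ.prod μ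
        ≤ ∫⁻ z in (s ×ˢ s) \ jumpSet f s r,
            edist (π (f z.1)) (π (f z.2)) ^ p / edist z.1 z.2 ^ q ∂μ.prod μ := by
          refine setLIntegral_mono' ((hs.prod hs).diff hJ) fun z hz => ?_
          have hsmall : edist (f z.1) (f z.2) ≤ r := not_lt.1 fun h => hz.2 ⟨hz.1, h⟩
          gcongr
          exact hπ _ _ hsmall
      _ ≤ gagliardoEnergy μ p q (π ∘ f) s :=
          (lintegral_mono_set sdiff_subset).trans setLIntegral_prod_le_gagliardoEnergy

lemma jumpMass_le_jumpMass_add [SFinite μ] (hp : 0 ≤ p) (ht : t ≠ 0)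
    (hπ : ∀ a b, edist a b ≤ r → edist a b ≤ edist (π a) (π b))
    (hs : MeasurableSet s) (hf : ContinuousOn f s) :
    jumpMass μ q f s t ≤
      jumpMass μ q f s r + (t ^ p)⁻¹ * gagliardoEnergy μ p q (π ∘ f) s := by
  have hJ {t} : MeasurableSet (jumpSet f s t) := measurableSet_jumpSet hs hf
  have htp : t ^ p ≠ 0 := by simp [ENNReal.rpow_eq_zero_iff, ht, hp.not_gt]
  rw [jumpMass, ← lintegral_inter_add_sdiff _ _ (hJ (t := r))]
  gcongr
  · exact lintegral_mono_set inter_subset_right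
  · calc ∫⁻ z in jumpSet f s t \ jumpSet f s r, (edist z.1 z.2 ^ q)⁻¹ ∂μ.prod μ
        ≤ ∫⁻ z in jumpSet f s t \ jumpSet f s r, (t ^ p)⁻¹ *
            (edist (π (f z.1)) (π (f z.2)) ^ p / edist z.1 z.2 ^ q) ∂μ.prod μ := by
          refine setLIntegral_mono' (hJ.diff hJ) fun z hz => ?_
          have hlarge : t < edist (f z.1) (f z.2) := hz.1.2
          have hsmall : edist (f z.1) (f z.2) ≤ r := not_lt.1 fun h => hz.2 ⟨hz.1.1, h⟩
          have htop : t ^ p ≠ ⊤ := ENNReal.rpow_ne_top_of_nonneg hp hlarge.ne_top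
          rw [div_eq_mul_inv, ← mul_assoc]
          refine le_mul_of_one_le_left zero_le ?_
          rw [← ENNReal.inv_mul_cancel htp htop]
          gcongr
          exact hlarge.le.trans (hπ _ _ hsmall)
      _ = (t ^ p)⁻¹ * ∫⁻ z in jumpSet f s t \ jumpSet f s r,
            edist (π (f z.1)) (π (f z.2)) ^ p / edist z.1 z.2 ^ q ∂μ.prod μ :=
          lintegral_const_mul' _ _ (ENNReal.inv_ne_top.2 htp)
      _ ≤ (t ^ p)⁻¹ * gagliardoEnergy μ p q (π ∘ f) s := by
          gcongr
          exact (lintegral_mono_set (sdiff_subset.trans jumpSet_subset_prod)).trans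
            setLIntegral_prod_le_gagliardoEnergy

lemma jumpMass_ne_top_of_isCompact [IsFiniteMeasureOnCompacts μ] [SFinite μ]
    (hq : 0 ≤ q) (hr : r ≠ 0) (hs : IsCompact s) (hsm : MeasurableSet s)
    (hf : ContinuousOn f s) : jumpMass μ q f s r ≠ ⊤ := by
  obtain ⟨δ, hδ, hfδ⟩ := EMetric.uniformContinuousOn_iff.1
    (hs.uniformContinuousOn_of_continuous hf) r (pos_iff_ne_zero.2 hr)
  have hδq : (δ ^ q)⁻¹ ≠ ⊤ := by simp [ENNReal.rpow_eq_zero_iff, hδ.ne', hq.not_gt]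
  have hfin : (μ.prod μ) (jumpSet f s r) ≠ ⊤ :=
    ne_top_of_le_ne_top (by simpa using ENNReal.mul_ne_top hs.measure_ne_top hs.measure_ne_top)
      (measure_mono jumpSet_subset_prod)
  refine ne_top_of_le_ne_top (ENNReal.mul_ne_top hδq hfin) ?_
  rw [jumpMass, ← setLIntegral_const]
  refine setLIntegral_mono' (measurableSet_jumpSet hsm hf) fun z hz => ?_
  have hfar : δ ≤ edist z.1 z.2 := not_lt.1 fun h => (hfδ hz.1.1 hz.1.2 h).not_gt hz.2
  gcongr

end JumpMass

/-- The factor `2 ^ (d + 1 - q)` gained by passing from a jump to one of half the size at a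
midpoint, in dimension `d`. -/
noncomputable def midpointFactor (d : ℕ) (q : ℝ) : ℝ≥0∞ := 2 ^ (d + 1 - q)

lemma midpointFactor_lt_one {d : ℕ} {q : ℝ} (hq : d + 1 < q) : midpointFactor d q < 1 :=
  ENNReal.rpow_lt_one_of_one_lt_of_neg (by simp) (by linarith)

section Midpoint

variable {E X : Type*} [NormedAddCommGroup E] [NormedSpace ℝ E] [PseudoEMetricSpace X]
  {q : ℝ} {f : E → X} {s : Set E} {t : ℝ≥0∞}

lemma edist_eq_two_mul_edist_left_midpoint (x y : E) :
    edist x y = 2 * edist x (midpoint ℝ x y) := by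
  rw [edist_nndist, edist_nndist, nndist_left_midpoint]
  norm_cast
  simp

lemma inv_edist_rpow_eq_left_midpoint (hq : 0 ≤ q) (x y : E) :
    (edist x y ^ q)⁻¹ = 2 ^ (-q) * (edist x (midpoint ℝ x y) ^ q)⁻¹ := by
  have htwo : (2 : ℝ≥0∞) ^ q ≠ ⊤ := ENNReal.rpow_ne_top_of_nonneg hq (by simp)
  have htwo' : (2 : ℝ≥0∞) ^ q ≠ 0 := by simp [ENNReal.rpow_eq_zero_iff]
  rw [edist_eq_two_mul_edist_left_midpoint x y, ENNReal.mul_rpow_of_nonneg _ _ hq,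
    ENNReal.mul_inv (.inl htwo') (.inl htwo), ENNReal.rpow_neg]

lemma jumpSet_subset_preimage_midpoint (hs : Convex ℝ s) :
    jumpSet f s t ⊆ (fun z => (z.1, midpoint ℝ z.1 z.2)) ⁻¹' jumpSet f s (t / 2) ∪
      (fun z => (z.2, midpoint ℝ z.2 z.1)) ⁻¹' jumpSet f s (t / 2) := by
  rintro ⟨x, y⟩ ⟨⟨hx, hy⟩, hxy⟩
  have hm : midpoint ℝ x y ∈ s := hs.midpoint_mem hx hy
  by_contra! hmem
  simp only [mem_union, mem_preimage, jumpSet, mem_inter_iff, mem_prod, mem_ofPred_eq, hx, hy, hm,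
    midpoint_comm y x, true_and, not_or, not_lt] at hmem
  refine (show t < edist (f x) (f y) from hxy).not_ge ?_
  calc edist (f x) (f y)
      ≤ edist (f x) (f (midpoint ℝ x y)) + edist (f y) (f (midpoint ℝ x y)) :=
        edist_triangle_right _ _ _
    _ ≤ t / 2 + t / 2 := add_le_add hmem.1 hmem.2
    _ = t := ENNReal.add_halves t

variable [FiniteDimensional ℝ E] [MeasurableSpace E] [BorelSpace E]
  (μ : Measure E) [μ.IsAddHaarMeasure]

lemma map_midpoint_addHaar (x : E) :
    μ.map (midpoint ℝ x) = (2 : ℝ≥0∞) ^ Module.finrank ℝ E • μ := by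
  have hmid : midpoint ℝ x = (((2 : ℝ)⁻¹ • x) + ·) ∘ ((2 : ℝ)⁻¹ • ·) := by
    ext y
    simp only [midpoint_eq_smul_add, invOf_eq_inv, smul_add, Function.comp_apply]
  have htwo : (2 : ℝ)⁻¹ ≠ 0 := by norm_num
  rw [hmid, ← Measure.map_map (by fun_prop) (by fun_prop), Measure.map_addHaar_smul μ htwo,
    Measure.map_smul, map_add_left_eq_self, inv_pow, inv_inv, abs_of_pos (by positivity),
    ENNReal.ofReal_pow zero_le_two, ENNReal.ofReal_ofNat]

lemma measurePreserving_prodMk_midpoint :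
    MeasurePreserving (fun z : E × E => (z.1, midpoint ℝ z.1 z.2)) (μ.prod μ)
      ((2 : ℝ≥0∞) ^ Module.finrank ℝ E • μ.prod μ) := by
  rw [← Measure.prod_smul_right]
  refine (MeasurePreserving.id μ).skew_product (g := midpoint ℝ) ?_
    (.of_forall (map_midpoint_addHaar μ))
  simp only [Function.uncurry_def, midpoint_eq_smul_add]
  fun_prop

lemma setLIntegral_preimage_midpoint (hq : 0 ≤ q) {A : Set (E × E)} (hA : MeasurableSet A) :
    ∫⁻ z in (fun z => (z.1, midpoint ℝ z.1 z.2)) ⁻¹' A, (edist z.1 z.2 ^ q)⁻¹ ∂μ.prod μ =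
      2 ^ (Module.finrank ℝ E - q) * ∫⁻ z in A, (edist z.1 z.2 ^ q)⁻¹ ∂μ.prod μ := by
  set m : E × E → E × E := fun z => (z.1, midpoint ℝ z.1 z.2)
  calc ∫⁻ z in m ⁻¹' A, (edist z.1 z.2 ^ q)⁻¹ ∂μ.prod μ
      = 2 ^ (-q) * ∫⁻ z in m ⁻¹' A, (edist (m z).1 (m z).2 ^ q)⁻¹ ∂μ.prod μ := by
        rw [← lintegral_const_mul' _ _ (by simp)]
        exact lintegral_congr fun z => inv_edist_rpow_eq_left_midpoint hq z.1 z.2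
    _ = 2 ^ (-q) * (2 ^ Module.finrank ℝ E * ∫⁻ z in A, (edist z.1 z.2 ^ q)⁻¹ ∂μ.prod μ) := by
        rw [(measurePreserving_prodMk_midpoint μ).setLIntegral_comp_preimage hA
          measurable_gagliardoKernel, Measure.restrict_smul, lintegral_smul_measure, smul_eq_mul]
    _ = 2 ^ (Module.finrank ℝ E - q) * ∫⁻ z in A, (edist z.1 z.2 ^ q)⁻¹ ∂μ.prod μ := by
        rw [← mul_assoc, sub_eq_neg_add, ENNReal.rpow_add _ _ (by simp) (by simp),
          ENNReal.rpow_natCast]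

lemma jumpMass_le_mul_jumpMass_half (hq : 0 ≤ q) (hs : Convex ℝ s) (hsm : MeasurableSet s)
    (hf : ContinuousOn f s) :
    jumpMass μ q f s t ≤ midpointFactor (Module.finrank ℝ E) q * jumpMass μ q f s (t / 2) := by
  set J : Set (E × E) := jumpSet f s (t / 2)
  have hJ : MeasurableSet J := measurableSet_jumpSet hsm hf
  set m : E × E → E × E := fun z => (z.1, midpoint ℝ z.1 z.2)
  have hm : Measurable m := (measurePreserving_prodMk_midpoint μ).measurable
  have hswap : ∫⁻ z in (m ∘ Prod.swap) ⁻¹' J, (edist z.1 z.2 ^ q)⁻¹ ∂μ.prod μ =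
      ∫⁻ z in m ⁻¹' J, (edist z.1 z.2 ^ q)⁻¹ ∂μ.prod μ := by
    rw [← Measure.measurePreserving_swap.setLIntegral_comp_preimage (hm hJ)
      measurable_gagliardoKernel, preimage_comp]
    simp only [Prod.fst_swap, Prod.snd_swap, edist_comm]
  calc jumpMass μ q f s t
      ≤ ∫⁻ z in m ⁻¹' J ∪ (m ∘ Prod.swap) ⁻¹' J, (edist z.1 z.2 ^ q)⁻¹ ∂μ.prod μ :=
        lintegral_mono_set (jumpSet_subset_preimage_midpoint hs)
    _ ≤ 2 * ∫⁻ z in m ⁻¹' J, (edist z.1 z.2 ^ q)⁻¹ ∂μ.prod μ := by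
        rw [two_mul]
        exact (lintegral_union_le _ _ _).trans_eq (congrArg _ hswap)
    _ = midpointFactor (Module.finrank ℝ E) q * jumpMass μ q f s (t / 2) := by
        rw [midpointFactor, setLIntegral_preimage_midpoint μ hq hJ, ← mul_assoc,
          add_sub_right_comm, add_comm _ 1, ENNReal.rpow_add _ _ (by simp) (by simp),
          ENNReal.rpow_one]
        rfl

end Midpoint

lemma exists_monotone_isCompact_iUnion_ae_eq_of_convex {E : Type*}
    [NormedAddCommGroup E] [NormedSpace ℝ E] [FiniteDimensional ℝ E] [MeasurableSpace E]
    [BorelSpace E] (μ : Measure E) [μ.IsAddHaarMeasure] {s : Set E} (hs : Convex ℝ s) :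
    ∃ K : ℕ → Set E, Monotone K ∧ (∀ n, IsCompact (K n)) ∧ (∀ n, Convex ℝ (K n)) ∧
      (∀ n, K n ⊆ s) ∧ ⋃ n, K n =ᵐ[μ] s := by
  rcases s.eq_empty_or_nonempty with rfl | hne
  · exact ⟨fun _ => ∅, monotone_const, by simp, by simp [convex_empty], by simp, by simp⟩
  have : Nonempty s := hne.to_subtype
  let d : ℕ → E := fun n => TopologicalSpace.denseSeq s n
  let K : ℕ → Set E := fun n => convexHull ℝ (d '' Iic n)
  have hKmono : Monotone K := fun _ _ h => convexHull_mono (image_mono (Iic_subset_Iic.2 h))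
  have hKs (n) : K n ⊆ s := convexHull_min (by rintro _ ⟨k, -, rfl⟩; exact Subtype.coe_prop _) hs
  have hKU : ⋃ n, K n ⊆ s := iUnion_subset hKs
  refine ⟨K, hKmono, fun n => ((finite_Iic n).image d).isCompact_convexHull ℝ,
    fun n => convex_convexHull ℝ _, hKs, hKU.eventuallyLE.antisymm ?_⟩
  have hdense : s ⊆ closure (⋃ n, K n) := by
    have hrange : range d ⊆ ⋃ n, K n := range_subset_iff.2 fun n =>
      mem_iUnion.2 ⟨n, subset_convexHull ℝ _ (mem_image_of_mem d self_mem_Iic)⟩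
    refine fun x hx => closure_mono hrange ?_
    have hxd : x ∈ Subtype.val '' closure (range (TopologicalSpace.denseSeq s)) :=
      ⟨⟨x, hx⟩, TopologicalSpace.denseRange_denseSeq s ⟨x, hx⟩, rfl⟩
    simpa only [d, range_comp'] using image_closure_subset_closure_image continuous_subtype_val hxd
  have hconv : Convex ℝ (⋃ n, K n) :=
    hKmono.directed_le.convex_iUnion fun n => convex_convexHull ℝ _
  refine ae_le_set.2 (measure_mono_null ?_ (hconv.addHaar_frontier μ))
  exact (sdiff_subset_sdiff_left hdense).trans (sdiff_subset_sdiff_right interior_subset)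

lemma le_div_one_sub_mul_of_le_mul_add {c m n : ℝ≥0∞} (hc : c < 1) (hm : m ≠ ⊤)
    (h : m ≤ c * (m + n)) : m ≤ c / (1 - c) * n := by
  have hsub : (1 - c) * m ≤ c * n := by
    rw [ENNReal.sub_mul fun _ _ => hm, one_mul, tsub_le_iff_left, ← mul_add]
    exact h
  rw [ENNReal.div_eq_inv_mul, mul_assoc]
  exact (ENNReal.mul_le_iff_le_inv (tsub_pos_of_lt hc).ne' (by simp)).1 hsub

section Lifting

variable {E X Y : Type*} [NormedAddCommGroup E] [NormedSpace ℝ E] [FiniteDimensional ℝ E]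
  [MeasurableSpace E] [BorelSpace E] [PseudoEMetricSpace X] [PseudoEMetricSpace Y]
  (μ : Measure E) [μ.IsAddHaarMeasure]
  {p q : ℝ} {π : X → Y} {f : E → X} {s : Set E} {r D : ℝ≥0∞}

/-- The constant of the lifting estimate in dimension `d`. -/
noncomputable def liftingConst (d : ℕ) (p q : ℝ) : ℝ≥0∞ :=
  1 + 2 ^ p * (midpointFactor d q / (1 - midpointFactor d q))

lemma liftingConst_ne_zero (d : ℕ) : liftingConst d p q ≠ 0 :=
  (zero_lt_one.trans_le le_self_add).ne'

lemma liftingConst_ne_top {d : ℕ} (hp : 0 ≤ p) (hq : d + 1 < q) : liftingConst d p q ≠ ⊤ := by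
  have hc := midpointFactor_lt_one hq
  have h2 : (2 : ℝ≥0∞) ^ p ≠ ⊤ := ENNReal.rpow_ne_top_of_nonneg hp (by simp)
  exact ENNReal.add_ne_top.2 ⟨ENNReal.one_ne_top,
    ENNReal.mul_ne_top h2 (ENNReal.div_ne_top hc.ne_top (tsub_pos_of_lt hc).ne')⟩

lemma jumpMass_le_mul_gagliardoEnergy (hp : 0 ≤ p) (hq : Module.finrank ℝ E + 1 < q) (hr : r ≠ 0)
    (hπ : ∀ a b, edist a b ≤ r → edist a b ≤ edist (π a) (π b))
    (hs : Convex ℝ s) (hsc : IsCompact s) (hf : ContinuousOn f s) :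
    jumpMass μ q f s r ≤ midpointFactor (Module.finrank ℝ E) q /
      (1 - midpointFactor (Module.finrank ℝ E) q) *
        (((r / 2) ^ p)⁻¹ * gagliardoEnergy μ p q (π ∘ f) s) := by
  have hq0 : 0 ≤ q := le_trans (by positivity) hq.le
  refine le_div_one_sub_mul_of_le_mul_add (midpointFactor_lt_one hq)
    (jumpMass_ne_top_of_isCompact hq0 hr hsc hsc.measurableSet hf) ?_
  refine (jumpMass_le_mul_jumpMass_half μ hq0 hs hsc.measurableSet hf).trans ?_
  gcongr
  exact jumpMass_le_jumpMass_add hp (ENNReal.half_pos hr).ne' hπ hsc.measurableSet hf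

lemma rpow_mul_inv_half_rpow_le (hp : 0 ≤ p) :
    D ^ p * ((r / 2) ^ p)⁻¹ ≤ 2 ^ p * max 1 (D / r) ^ p := by
  rw [← ENNReal.inv_rpow, ← ENNReal.mul_rpow_of_nonneg _ _ hp, ← ENNReal.mul_rpow_of_nonneg _ _ hp,
    ENNReal.inv_div (by simp) (by simp)]
  refine ENNReal.rpow_le_rpow ?_ hp
  calc D * (2 / r) = 2 * (D / r) := by simp only [div_eq_mul_inv]; ring
    _ ≤ 2 * max 1 (D / r) := by gcongr; exact le_max_right _ _

lemma gagliardoEnergy_le_of_isCompact (hp : 0 ≤ p) (hq : Module.finrank ℝ E + 1 < q)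
    (hr : r ≠ 0) (hπ : ∀ a b, edist a b ≤ r → edist a b ≤ edist (π a) (π b))
    (hs : Convex ℝ s) (hsc : IsCompact s) (hf : ContinuousOn f s)
    (hD : ∀ x ∈ s, ∀ y ∈ s, edist (f x) (f y) ≤ D) :
    gagliardoEnergy μ p q f s ≤ liftingConst (Module.finrank ℝ E) p q * max 1 (D / r) ^ p *
      gagliardoEnergy μ p q (π ∘ f) s := by
  set G := gagliardoEnergy μ p q (π ∘ f) s
  set A := midpointFactor (Module.finrank ℝ E) q / (1 - midpointFactor (Module.finrank ℝ E) q)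
    with hA
  have hone : 1 ≤ max 1 (D / r) ^ p := by
    simpa using ENNReal.rpow_le_rpow (le_max_left 1 (D / r)) hp
  calc gagliardoEnergy μ p q f s
      ≤ D ^ p * jumpMass μ q f s r + G :=
        gagliardoEnergy_le_add_jumpMass hp hπ hsc.measurableSet hf hD
    _ ≤ D ^ p * (A * (((r / 2) ^ p)⁻¹ * G)) + G := by
        gcongr
        exact jumpMass_le_mul_gagliardoEnergy μ hp hq hr hπ hs hsc hf
    _ = D ^ p * ((r / 2) ^ p)⁻¹ * A * G + 1 * G := by ring
    _ ≤ 2 ^ p * max 1 (D / r) ^ p * A * G + max 1 (D / r) ^ p * G := by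
        gcongr ?_ * _ * _ + ?_ * _
        exact rpow_mul_inv_half_rpow_le hp
    _ = liftingConst (Module.finrank ℝ E) p q * max 1 (D / r) ^ p * G := by
        rw [liftingConst, ← hA]
        ring

theorem lifting_one_dimensional_estimate_general (hp : 0 ≤ p) (hq : Module.finrank ℝ E + 1 < q)
    (hr : r ≠ 0) (hπ : ∀ a b, edist a b ≤ r → edist a b ≤ edist (π a) (π b))
    (hs : Convex ℝ s) (hf : ContinuousOn f s) (hD : ∀ x ∈ s, ∀ y ∈ s, edist (f x) (f y) ≤ D) :
    gagliardoEnergy μ p q f s ≤ liftingConst (Module.finrank ℝ E) p q * max 1 (D / r) ^ p *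
      gagliardoEnergy μ p q (π ∘ f) s := by
  obtain ⟨K, hKmono, hKc, hKconv, hKs, hKae⟩ :=
    exists_monotone_isCompact_iUnion_ae_eq_of_convex μ hs
  rw [← gagliardoEnergy_congr_ae (f := f) hKae, gagliardoEnergy_iUnion hKmono
    (fun n => (hKc n).measurableSet) (hf.mono (iUnion_subset hKs))]
  refine iSup_le fun n => ?_
  calc gagliardoEnergy μ p q f (K n)
      ≤ liftingConst (Module.finrank ℝ E) p q * max 1 (D / r) ^ p *
          gagliardoEnergy μ p q (π ∘ f) (K n) :=
        gagliardoEnergy_le_of_isCompact μ hp hq hr hπ (hKconv n) (hKc n) (hf.mono (hKs n))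
          fun x hx y hy => hD x (hKs n hx) y (hKs n hy)
    _ ≤ liftingConst (Module.finrank ℝ E) p q * max 1 (D / r) ^ p *
          gagliardoEnergy μ p q (π ∘ f) s := by
        gcongr
        exact gagliardoEnergy_mono (hKs n)

end Lifting

/-- **One-dimensional lifting estimate.** For `0 < s < 1`, `1 < p` with `sp > 1`, there is a
constant `C = C(s,p)` such that whenever `π : Ñ → N` between metric spaces is nonexpansive
and an isometry at scale `ρ > 0`, `Ñ` has diameter at most `D`, `I ⊆ ℝ` is an interval and
`ũ : I → Ñ` is continuous, then, with `u := π ∘ ũ`,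
`∫_I∫_I d_Ñ(ũ(x),ũ(y))^p/|x-y|^{1+sp} ≤ C max(1,D/ρ)^p ∫_I∫_I d_N(u(x),u(y))^p/|x-y|^{1+sp}`. -/
theorem lifting_one_dimensional_estimate (s p : ℝ) (hs0 : 0 < s) (hs1 : s < 1)
    (hp1 : 1 < p) (hsp : 1 < s * p) :
    ∃ C : ℝ, 0 < C ∧
      ∀ (Ntl N : Type*) [MetricSpace Ntl] [MetricSpace N] (π : Ntl → N) (ρ D : ℝ),
        0 < ρ →
        (∀ a b : Ntl, dist (π a) (π b) ≤ dist a b) →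
        (∀ a b : Ntl, dist a b ≤ ρ → dist (π a) (π b) = dist a b) →
        (∀ a b : Ntl, dist a b ≤ D) →
        ∀ I : Set ℝ, I.OrdConnected →
        ∀ ut : ℝ → Ntl, ContinuousOn ut I →
          (∫⁻ x in I, ∫⁻ y in I,
              edist (ut x) (ut y) ^ p / edist x y ^ (1 + s * p)) ≤
            ENNReal.ofReal C * ENNReal.ofReal (max 1 (D / ρ)) ^ p *
              ∫⁻ x in I, ∫⁻ y in I,
                edist (π (ut x)) (π (ut y)) ^ p / edist x y ^ (1 + s * p) := by
  have hp : 0 ≤ p := by linarith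
  have hq : (Module.finrank ℝ ℝ : ℝ) + 1 < 1 + s * p := by
    rw [Module.finrank_self, Nat.cast_one]
    linarith
  have hC : liftingConst (Module.finrank ℝ ℝ) p (1 + s * p) ≠ ⊤ := liftingConst_ne_top hp hq
  refine ⟨_, ENNReal.toReal_pos (liftingConst_ne_zero _) hC, ?_⟩
  intro Ntl N _ _ π ρ D hρ _ hπ hD I hI ut hut
  rw [ENNReal.ofReal_toReal hC, ENNReal.ofReal_max, ENNReal.ofReal_one,
    ENNReal.ofReal_div_of_pos hρ]
  refine lifting_one_dimensional_estimate_general volume hp hq (ENNReal.ofReal_pos.2 hρ).ne' ?_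
    hI.convex hut fun x _ y _ => edist_dist (ut x) (ut y) ▸ ENNReal.ofReal_le_ofReal (hD _ _)
  intro a b hab
  rw [edist_le_ofReal hρ.le] at hab
  rw [edist_dist, edist_dist, hπ a b hab]
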